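/- Let Γ be a finite group (not necessarily abelian), let G = Γ² ⋊ S₂ be the semidirect product where S₂ acts on Γ² by swapping coordinates, and let K be the subgroup of G consisting of all elements (d, σ) with d a constant pair (d in the diagonal Δ ⊆ Γ²) and σ ∈ S₂. Then for any two functions f₁, f₂ : G → ℂ satisfying f(k₁ x k₂) = f(x) for all k₁, k₂ ∈ K and x ∈ G, the convolutions agree: f₁ * f₂ = f₂ * f₁; that is, (G, K) is a Gelfand pair. -/

import Mathlib

/-!
Every `x = (g, σ)` in `G = Γ² ⋊ S₂` satisfies `x⁻¹ ∈ K x K`: conjugating `(a, b)` by the swap gives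
`(b, a)`, and multiplying by the constants `a⁻¹` on the left and `b⁻¹` on the right gives
`(a⁻¹, b⁻¹)`. Hence every `K`-bi-invariant function is invariant under inversion, and Gelfand's
trick applies: `(f₁ * f₂)(x) = (f₂ * f₁)(x⁻¹)` by a change of variables, while `f₂ * f₁` is itself
bi-invariant, so its values at `x⁻¹` and `x` agree.
-/

open SemidirectProduct

variable (Γ : Type*) [Group Γ] [Fintype Γ]

/-- The automorphism of `Γ²` given by permuting the two coordinates:
`(σ • g) i = g (σ⁻¹ i)`. -/
def permAut (σ : Equiv.Perm (Fin 2)) : MulAut (Fin 2 → Γ) where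
  toFun g := fun i => g (σ⁻¹ i)
  invFun g := fun i => g (σ i)
  left_inv g := funext fun i => by simp
  right_inv g := funext fun i => by simp
  map_mul' g h := rfl

/-- The action of `S₂` on `Γ²` by swapping coordinates, as a homomorphism
`S₂ →* MulAut (Γ²)`. -/
def permHom : Equiv.Perm (Fin 2) →* MulAut (Fin 2 → Γ) where
  toFun := permAut Γ
  map_one' := by
    ext g i
    rfl
  map_mul' σ τ := by
    ext g i
    simp [permAut, Equiv.Perm.mul_apply]

instance : Fintype ((Fin 2 → Γ) ⋊[permHom Γ] Equiv.Perm (Fin 2)) :=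
  Fintype.ofEquiv ((Fin 2 → Γ) × Equiv.Perm (Fin 2))
    { toFun := fun p => ⟨p.1, p.2⟩
      invFun := fun x => (x.left, x.right)
      left_inv := fun _ => rfl
      right_inv := fun _ => rfl }

/-- The double cosets of `K` are closed under inversion. -/
lemma inv_eq_mul_mul (x : (Fin 2 → Γ) ⋊[permHom Γ] Equiv.Perm (Fin 2)) :
    ∃ (d₁ d₂ : Γ) (σ₁ σ₂ : Equiv.Perm (Fin 2)),
      x⁻¹ = (⟨fun _ => d₁, σ₁⟩ : (Fin 2 → Γ) ⋊[permHom Γ] Equiv.Perm (Fin 2)) * x *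
        ⟨fun _ => d₂, σ₂⟩ := by
  obtain ⟨g, σ⟩ := x
  refine ⟨(g 0)⁻¹, (g 1)⁻¹, σ⁻¹ * Equiv.swap 0 1, σ⁻¹ * Equiv.swap 0 1, ?_⟩
  apply SemidirectProduct.ext
  · funext i
    have key : ∀ j, (g j)⁻¹ = (g 0)⁻¹ * g (Equiv.swap 0 1 j) * (g 1)⁻¹ := by
      intro j
      fin_cases j <;> simp
    rw [SemidirectProduct.mul_left, SemidirectProduct.mul_left, SemidirectProduct.inv_left]
    simpa [permHom, permAut, -SemidirectProduct.mk_eq_inl_mul_inr] using key (σ i)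
  · change σ⁻¹ = σ⁻¹ * Equiv.swap 0 1 * σ * (σ⁻¹ * Equiv.swap 0 1)
    simp [mul_assoc]

/-- Let `Γ` be a finite group (not necessarily abelian), `G = Γ² ⋊ S₂` where
`S₂` swaps the coordinates, and `K ≤ G` the subgroup of elements `(d, σ)` with
`d` a constant pair. Then any two `K`-bi-invariant functions `G → ℂ` commute
under convolution: `(G, K)` is a Gelfand pair. -/
theorem gelfand_pair_wreath_two (f₁ f₂ : ((Fin 2 → Γ) ⋊[permHom Γ] Equiv.Perm (Fin 2)) → ℂ)
    (h₁ : ∀ (d₁ d₂ : Γ) (σ₁ σ₂ : Equiv.Perm (Fin 2))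
        (x : (Fin 2 → Γ) ⋊[permHom Γ] Equiv.Perm (Fin 2)),
        f₁ ((⟨fun _ => d₁, σ₁⟩ : (Fin 2 → Γ) ⋊[permHom Γ] Equiv.Perm (Fin 2)) * x *
          ⟨fun _ => d₂, σ₂⟩) = f₁ x)
    (h₂ : ∀ (d₁ d₂ : Γ) (σ₁ σ₂ : Equiv.Perm (Fin 2))
        (x : (Fin 2 → Γ) ⋊[permHom Γ] Equiv.Perm (Fin 2)),
        f₂ ((⟨fun _ => d₁, σ₁⟩ : (Fin 2 → Γ) ⋊[permHom Γ] Equiv.Perm (Fin 2)) * x *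
          ⟨fun _ => d₂, σ₂⟩) = f₂ x) :
    ∀ x, ∑ y, f₁ y * f₂ (y⁻¹ * x) = ∑ y, f₂ y * f₁ (y⁻¹ * x) := by
  intro x
  have inv₁ : ∀ y, f₁ y⁻¹ = f₁ y := by
    intro y
    obtain ⟨d₁, d₂, σ₁, σ₂, h⟩ := inv_eq_mul_mul Γ y
    rw [h, h₁]
  have inv₂ : ∀ y, f₂ y⁻¹ = f₂ y := by
    intro y
    obtain ⟨d₁, d₂, σ₁, σ₂, h⟩ := inv_eq_mul_mul Γ y
    rw [h, h₂]
  have right₁ : ∀ (d : Γ) (σ : Equiv.Perm (Fin 2)) (y : _), f₁ (y * ⟨fun _ => d, σ⟩) = f₁ y := by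
    intro d σ y
    have h := h₁ 1 d 1 σ y
    rwa [show (⟨fun _ => 1, 1⟩ : (Fin 2 → Γ) ⋊[permHom Γ] Equiv.Perm (Fin 2)) = 1 from rfl,
      one_mul] at h
  have left₂ : ∀ (d : Γ) (σ : Equiv.Perm (Fin 2)) (y : _), f₂ (⟨fun _ => d, σ⟩ * y) = f₂ y := by
    intro d σ y
    have h := h₂ d 1 σ 1 y
    rwa [show (⟨fun _ => 1, 1⟩ : (Fin 2 → Γ) ⋊[permHom Γ] Equiv.Perm (Fin 2)) = 1 from rfl,
      mul_one] at h
  calc ∑ y, f₁ y * f₂ (y⁻¹ * x) = ∑ y, f₂ y * f₁ (y⁻¹ * x⁻¹) := by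
        rw [← Equiv.sum_comp (Equiv.mulLeft x)]
        refine Finset.sum_congr rfl fun y _ => ?_
        rw [Equiv.coe_mulLeft, ← inv₁, ← inv₂ y, mul_comm, mul_inv_rev, inv_mul_cancel_right]
    _ = ∑ y, f₂ y * f₁ (y⁻¹ * x) := by
        obtain ⟨d₁, d₂, σ₁, σ₂, h⟩ := inv_eq_mul_mul Γ x
        rw [h, ← Equiv.sum_comp (Equiv.mulLeft ⟨fun _ => d₁, σ₁⟩)]
        refine Finset.sum_congr rfl fun y _ => ?_
        rw [Equiv.coe_mulLeft, left₂, ← mul_assoc, right₁, mul_inv_rev, ← mul_assoc,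
          inv_mul_cancel_right]
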